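/- Let k be a commutative ring, A an associative unital k-algebra, H a Hopf k-algebra with a weak action (h,a) ↦ a^h on A, and f : H⊗H → A a k-linear map. Define a product on A⊗H by (a⊗h)(b⊗l) = a b^{h^{(1)}} f(h^{(2)}, l^{(1)}) ⊗ h^{(3)} l^{(2)}. Then this product is associative with 1⊗1 as two-sided identity if and only if: (i) f is normal, i.e. f(h,1) = f(1,h) = ε(h)1_A for all h ∈ H; (ii) f satisfies the cocycle condition f(l^{(1)},m^{(1)})^{h^{(1)}} f(h^{(2)}, l^{(2)}m^{(2)}) = f(h^{(1)},l^{(1)}) f(h^{(2)}l^{(2)}, m) for all h,l,m ∈ H; and (iii) the twisted module condition (a^{l^{(1)}})^{h^{(1)}} f(h^{(2)}, l^{(2)}) = f(h^{(1)},l^{(1)}) a^{h^{(2)}l^{(2)}} holds for all h,l ∈ H and a ∈ A. -/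

import Mathlib

open TensorProduct

noncomputable section

namespace HopfCrossed

variable (k : Type) [CommRing k]

def TpowCat (V : ModuleCat k) : ℕ → ModuleCat k
  | 0 => ModuleCat.of k k
  | n + 1 => ModuleCat.of k (V ⊗[k] (TpowCat V n))

abbrev Tpow (V : Type) [AddCommGroup V] [Module k V] (n : ℕ) : Type :=
  TpowCat k (ModuleCat.of k V) n

def tp {V : Type} [AddCommGroup V] [Module k V] : ∀ {n : ℕ}, (Fin n → V) → Tpow k V n
  | 0, _ => (1 : k)
  | _ + 1, v => (v 0) ⊗ₜ[k] (tp fun i => v i.succ)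

section Coalg
variable {H : Type} [AddCommGroup H] [Module k H]

def itComul [Coalgebra k H] : ∀ n : ℕ, H →ₗ[k] Tpow k H (n + 1)
  | 0 => (TensorProduct.rid k H).symm.toLinearMap
  | n + 1 =>
      (TensorProduct.map LinearMap.id (itComul n)) ∘ₗ (Coalgebra.comul (R := k))

def SRep [Coalgebra k H] (n : ℕ) (h : H) (N : ℕ) (u : Fin N → Fin (n + 1) → H) : Prop :=
  itComul k n h = ∑ i, tp k (u i)

def iterAct {A : Type} [AddCommGroup A] [Module k A]
    (act : H →ₗ[k] A →ₗ[k] A) : ∀ {s : ℕ}, (Fin s → H) → A → A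
  | 0, _, a => a
  | _ + 1, h, a => act (h 0) (iterAct act (fun i => h i.succ) a)

end Coalg

/-- A weak action of a Hopf algebra `H` on a `k`-algebra `A` (Blattner–Cohen–Montgomery,
Doi–Takeuchi), written `act h a = a^h`. -/
structure WeakAction (k A H : Type) [CommRing k] [Ring A] [Algebra k A] [Ring H] [HopfAlgebra k H] : Type where
  act : H →ₗ[k] A →ₗ[k] A
  act_mul : ∀ (h : H) (a b : A) (N : ℕ) (u : Fin N → Fin 2 → H), SRep k 1 h N u →
    act h (a * b) = ∑ i, act (u i 0) a * act (u i 1) b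
  act_one : ∀ h : H, act h 1 = Coalgebra.counit (R := k) h • (1 : A)
  one_act : ∀ a : A, act 1 a = a

variable {A H : Type} [Ring A] [Algebra k A] [Ring H] [HopfAlgebra k H]
variable {k}

/-- Normality of the cocycle `f`. -/
def IsNormal (f : H →ₗ[k] H →ₗ[k] A) : Prop :=
  ∀ h : H, f h 1 = Coalgebra.counit (R := k) h • (1 : A) ∧
    f 1 h = Coalgebra.counit (R := k) h • (1 : A)

/-- The cocycle condition
`f(l⁽¹⁾,m⁽¹⁾)^{h⁽¹⁾} f(h⁽²⁾, l⁽²⁾m⁽²⁾) = f(h⁽¹⁾,l⁽¹⁾) f(h⁽²⁾l⁽²⁾, m)`. -/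
def IsCocycle (W : WeakAction k A H) (f : H →ₗ[k] H →ₗ[k] A) : Prop :=
  ∀ (h l m : H) (N₁ N₂ N₃ : ℕ) (u : Fin N₁ → Fin 2 → H) (v : Fin N₂ → Fin 2 → H)
    (w : Fin N₃ → Fin 2 → H),
    SRep k 1 h N₁ u → SRep k 1 l N₂ v → SRep k 1 m N₃ w →
    (∑ i, ∑ j, ∑ p, W.act (u i 0) (f (v j 0) (w p 0)) * f (u i 1) (v j 1 * w p 1)) =
      ∑ i, ∑ j, f (u i 0) (v j 0) * f (u i 1 * v j 1) m

/-- The twisted module condition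
`(a^{l⁽¹⁾})^{h⁽¹⁾} f(h⁽²⁾,l⁽²⁾) = f(h⁽¹⁾,l⁽¹⁾) a^{h⁽²⁾l⁽²⁾}`. -/
def IsTwistedModule (W : WeakAction k A H) (f : H →ₗ[k] H →ₗ[k] A) : Prop :=
  ∀ (h l : H) (a : A) (N₁ N₂ : ℕ) (u : Fin N₁ → Fin 2 → H) (v : Fin N₂ → Fin 2 → H),
    SRep k 1 h N₁ u → SRep k 1 l N₂ v →
    (∑ i, ∑ j, W.act (u i 0) (W.act (v j 0) a) * f (u i 1) (v j 1)) =
      ∑ i, ∑ j, f (u i 0) (v j 0) * W.act (u i 1 * v j 1) a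


/-- `IsCrossedMul W f mul` says that the bilinear map `mul` on `A ⊗ H` is given by the
crossed product formula `(a ⊗ h)(b ⊗ l) = a b^{h⁽¹⁾} f(h⁽²⁾, l⁽¹⁾) ⊗ h⁽³⁾ l⁽²⁾`. -/
def IsCrossedMul (W : WeakAction k A H) (f : H →ₗ[k] H →ₗ[k] A)
    (mul : (A ⊗[k] H) →ₗ[k] (A ⊗[k] H) →ₗ[k] (A ⊗[k] H)) : Prop :=
  ∀ (a b : A) (h l : H) (N M : ℕ) (u : Fin N → Fin 3 → H) (v : Fin M → Fin 2 → H),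
    SRep k 2 h N u → SRep k 1 l M v →
    mul (a ⊗ₜ[k] h) (b ⊗ₜ[k] l) =
      ∑ i, ∑ j, (a * W.act (u i 0) b * f (u i 1) (v j 0)) ⊗ₜ[k] (u i 2 * v j 1)

section Star
open Coalgebra

section
variable {k : Type} [CommRing k] {A : Type} [Ring A] [Algebra k A]
variable {C : Type} [AddCommGroup C] [Module k C] [Coalgebra k C]
variable {X : Type} [AddCommGroup X] [Module k X] [Module A X] [IsScalarTower k A X]

/-- convolution action -/
def star (g : C →ₗ[k] A) (L : C →ₗ[k] X) : C →ₗ[k] X :=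
  TensorProduct.lift ((Algebra.lsmul k k X).toLinearMap.compl₁₂ g L) ∘ₗ comul (R := k)

lemma star_apply (g : C →ₗ[k] A) (L : C →ₗ[k] X) (c : C) {ι : Type} [Fintype ι]
    (x y : ι → C) (hc : comul (R := k) c = ∑ i, x i ⊗ₜ[k] y i) :
    star g L c = ∑ i, g (x i) • L (y i) := by
  simp [star, hc, map_sum]

lemma exists_repr (c : C) : ∃ (N : ℕ) (x y : Fin N → C),
    comul (R := k) c = ∑ i, x i ⊗ₜ[k] y i :=
  TensorProduct.exists_sum_tmul_eq _

lemma star_assoc (g g' : C →ₗ[k] A) (L : C →ₗ[k] X) :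
    star (star g g') L = star g (star g' L) := by
  ext c
  have h1 : ∀ z : C ⊗[k] C,
      TensorProduct.lift ((Algebra.lsmul k k X).toLinearMap.compl₁₂ (star g g') L) z =
      TensorProduct.lift ((Algebra.lsmul k k X).toLinearMap.compl₁₂ g
        (TensorProduct.lift ((Algebra.lsmul k k X).toLinearMap.compl₁₂ g' L)))
        (TensorProduct.assoc k C C C (comul.rTensor C z)) := by
    intro z
    induction z with
    | zero => simp
    | add a b ha hb => simp only [map_add, ha, hb]
    | tmul x y =>
      obtain ⟨N, u, v, h⟩ := exists_repr (k := k) x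
      simp [star_apply g g' x u v h, h, TensorProduct.sum_tmul, smul_smul]
  have h2 : ∀ z : C ⊗[k] C,
      TensorProduct.lift ((Algebra.lsmul k k X).toLinearMap.compl₁₂ g (star g' L)) z =
      TensorProduct.lift ((Algebra.lsmul k k X).toLinearMap.compl₁₂ g
        (TensorProduct.lift ((Algebra.lsmul k k X).toLinearMap.compl₁₂ g' L)))
        (comul.lTensor C z) := by
    intro z
    induction z with
    | zero => simp
    | add a b ha hb => simp only [map_add, ha, hb]
    | tmul x y => simp [star]
  exact (h1 (comul c)).trans ((congrArg _ (coassoc_apply c)).trans (h2 (comul c)).symm)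

/-- unit of convolution -/
def eps : C →ₗ[k] A := Algebra.linearMap k A ∘ₗ counit (R := k)

lemma star_eps (g : C →ₗ[k] A) : star g (eps : C →ₗ[k] A) = g := by
  ext c
  obtain ⟨N, u, v, h⟩ := exists_repr (k := k) c
  rw [star_apply g _ c u v h]
  have := congrArg (fun z => TensorProduct.rid k A (TensorProduct.map g LinearMap.id z))
    (lTensor_counit_comul (R := k) c)
  simp only [h, map_sum, LinearMap.lTensor_tmul, TensorProduct.map_tmul, TensorProduct.rid_tmul,
    LinearMap.id_apply, one_smul] at this
  rw [← this]
  simp [eps, Algebra.smul_def, Algebra.commutes]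

lemma eps_star (L : C →ₗ[k] X) : star (eps : C →ₗ[k] A) L = L := by
  ext c
  obtain ⟨N, u, v, h⟩ := exists_repr (k := k) c
  rw [star_apply _ L c u v h]
  have := congrArg (fun z => TensorProduct.lid k X (TensorProduct.map LinearMap.id L z))
    (rTensor_counit_comul (R := k) c)
  simp only [h, map_sum, LinearMap.rTensor_tmul, TensorProduct.map_tmul, TensorProduct.lid_tmul,
    LinearMap.id_apply, one_smul] at this
  rw [← this]
  simp [eps]

lemma star_comp {D : Type} [AddCommGroup D] [Module k D] [Coalgebra k D] (φ : D →ₗc[k] C)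
    (g : C →ₗ[k] A) (L : C →ₗ[k] X) :
    star (g ∘ₗ φ.toLinearMap) (L ∘ₗ φ.toLinearMap) = star g L ∘ₗ φ.toLinearMap := by
  ext d
  obtain ⟨N, u, v, h⟩ := exists_repr (k := k) d
  rw [star_apply _ _ d u v h, LinearMap.comp_apply,
    star_apply g L _ (fun i => φ (u i)) (fun i => φ (v i))]
  · rfl
  · have := CoalgHomClass.map_comp_comul_apply φ d
    rw [h] at this
    simpa using this.symm

lemma comp_star {Y : Type} [AddCommGroup Y] [Module k Y] [Module A Y] [IsScalarTower k A Y]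
    (E : X →ₗ[k] Y) (hE : ∀ (a : A) x, E (a • x) = a • E x) (g : C →ₗ[k] A) (L : C →ₗ[k] X) :
    E ∘ₗ star g L = star g (E ∘ₗ L) := by
  ext d
  obtain ⟨N, u, v, h⟩ := exists_repr (k := k) d
  rw [star_apply _ _ d u v h, LinearMap.comp_apply, star_apply _ _ d u v h]
  simp [hE]

lemma repr_tmul {D : Type} [AddCommGroup D] [Module k D] [Coalgebra k D] (c : C) (d : D)
    {ι κ : Type} [Fintype ι] [Fintype κ] (x y : ι → C) (x' y' : κ → D)
    (hc : comul (R := k) c = ∑ i, x i ⊗ₜ[k] y i) (hd : comul (R := k) d = ∑ i, x' i ⊗ₜ[k] y' i) :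
    comul (R := k) (c ⊗ₜ[k] d) =
      ∑ p : ι × κ, (x p.1 ⊗ₜ[k] x' p.2) ⊗ₜ[k] (y p.1 ⊗ₜ[k] y' p.2) := by
  rw [TensorProduct.comul_tmul, hc, hd, Fintype.sum_prod_type]
  simp [TensorProduct.sum_tmul, TensorProduct.tmul_sum]
  try exact Finset.sum_comm

lemma srep_one (h : C) (N : ℕ) (u : Fin N → Fin 2 → C) :
    SRep k 1 h N u ↔ comul (R := k) h = ∑ i, u i 0 ⊗ₜ[k] u i 1 := by
  have e : ∀ z : C ⊗[k] C, (TensorProduct.map LinearMap.id (TensorProduct.rid k C).symm.toLinearMap) z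
      = (TensorProduct.congr (LinearEquiv.refl k C) (TensorProduct.rid k C).symm) z := fun z => rfl
  have h1 : itComul k 1 h =
      (TensorProduct.congr (LinearEquiv.refl k C) (TensorProduct.rid k C).symm) (comul (R := k) h) := rfl
  have h2 : ∑ i, tp k (u i) =
      (TensorProduct.congr (LinearEquiv.refl k C) (TensorProduct.rid k C).symm)
        (∑ i, u i 0 ⊗ₜ[k] u i 1) := by
    rw [map_sum]; rfl
  unfold SRep
  rw [h1, h2]
  exact (LinearEquiv.injective _).eq_iff

lemma srep_two (h : C) (N : ℕ) (u : Fin N → Fin 3 → C) :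
    SRep k 2 h N u ↔ comul.lTensor C (comul (R := k) h) =
      ∑ i, u i 0 ⊗ₜ[k] (u i 1 ⊗ₜ[k] u i 2) := by
  let e := TensorProduct.congr (LinearEquiv.refl k C)
    (TensorProduct.congr (LinearEquiv.refl k C) (TensorProduct.rid k C).symm)
  have h1 : itComul k 2 h = e (comul.lTensor C (comul (R := k) h)) := by
    change TensorProduct.map LinearMap.id
      ((TensorProduct.map LinearMap.id (TensorProduct.rid k C).symm.toLinearMap) ∘ₗ comul)
      (comul (R := k) h) = _
    generalize comul (R := k) h = z
    induction z with
    | zero => simp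
    | add a b ha hb => simp only [map_add, ha, hb]
    | tmul x y => rfl
  have h2 : ∑ i, tp k (u i) = e (∑ i, u i 0 ⊗ₜ[k] (u i 1 ⊗ₜ[k] u i 2)) := by
    rw [map_sum]; rfl
  unfold SRep
  rw [h1, h2]
  exact (LinearEquiv.injective _).eq_iff

lemma exists_srep_two (h : C) : ∃ N u, SRep k 2 h N u := by
  obtain ⟨N, x, y, hx⟩ := TensorProduct.exists_sum_tmul_eq (comul.lTensor C (comul (R := k) h))
  choose M p q hpq using fun i => TensorProduct.exists_sum_tmul_eq (y i)
  let e := (Fintype.equivFin (Σ i, Fin (M i))).symm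
  refine ⟨_, fun j => ![x (e j).1, p _ (e j).2, q _ (e j).2], ?_⟩
  rw [srep_two, hx]
  refine Eq.trans ?_ (e.sum_comp
    (fun s : Σ i, Fin (M i) => x s.1 ⊗ₜ[k] (p _ s.2 ⊗ₜ[k] q _ s.2))).symm
  rw [Fintype.sum_sigma]
  refine Finset.sum_congr rfl fun i _ => ?_
  rw [hpq i, TensorProduct.tmul_sum]


lemma star_add (g : C →ₗ[k] A) (L L' : C →ₗ[k] X) : star g (L + L') = star g L + star g L' := by
  ext c
  obtain ⟨N, u, v, h⟩ := exists_repr (k := k) c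
  simp [star_apply _ _ c u v h, Finset.sum_add_distrib]

lemma star_zero (g : C →ₗ[k] A) : star g (0 : C →ₗ[k] X) = 0 := by
  ext c
  obtain ⟨N, u, v, h⟩ := exists_repr (k := k) c
  simp [star_apply _ _ c u v h]
end

section
variable {k : Type} [CommRing k] {A : Type} [Ring A] [Algebra k A]
variable {H : Type} [Ring H] [HopfAlgebra k H]
variable (W : WeakAction k A H) (f : H →ₗ[k] H →ₗ[k] A)
variable (mul : (A ⊗[k] H) →ₗ[k] (A ⊗[k] H) →ₗ[k] (A ⊗[k] H))

def FF : H ⊗[k] H →ₗ[k] A := TensorProduct.lift f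

def JJ : H →ₗ[k] A ⊗[k] H := TensorProduct.mk k A H 1

def mu : H ⊗[k] H →ₗ[k] H := LinearMap.mul' k H

def actL (b : A) : H →ₗ[k] A := W.act.flip b

def Lm (y : A ⊗[k] H) : H →ₗ[k] A ⊗[k] H := mul.flip y ∘ₗ JJ

def EE : A ⊗[k] H →ₗ[k] A :=
  (TensorProduct.rid k A).toLinearMap ∘ₗ LinearMap.lTensor A (counit (R := k))

def KK1 : H ⊗[k] (H ⊗[k] H) →ₗ[k] A := TensorProduct.lift W.act ∘ₗ LinearMap.lTensor H (FF f)

def KK2 : H ⊗[k] (H ⊗[k] H) →ₗ[k] A := FF f ∘ₗ LinearMap.lTensor H mu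

def KK3 : H ⊗[k] (H ⊗[k] H) →ₗ[k] A :=
  (TensorProduct.rid k A).toLinearMap ∘ₗ TensorProduct.map (FF f) (counit (R := k)) ∘ₗ
    (TensorProduct.assoc k H H H).symm.toLinearMap

def KK4 : H ⊗[k] (H ⊗[k] H) →ₗ[k] A :=
  FF f ∘ₗ LinearMap.rTensor H mu ∘ₗ (TensorProduct.assoc k H H H).symm.toLinearMap

def TT (c : A) : H ⊗[k] H →ₗ[k] A := TensorProduct.lift (W.act.compl₂ (actL W c))

def VV (z : A ⊗[k] H) : H ⊗[k] H →ₗ[k] A ⊗[k] H :=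
  TensorProduct.lift ((mul ∘ₗ JJ).compl₂ (Lm mul z))

@[simp] lemma FF_tmul (h l : H) : FF f (h ⊗ₜ[k] l) = f h l := rfl
@[simp] lemma JJ_apply (h : H) : (JJ h : A ⊗[k] H) = 1 ⊗ₜ h := rfl
@[simp] lemma mu_tmul (h l : H) : mu (h ⊗ₜ[k] l) = h * l := rfl
@[simp] lemma actL_apply (b : A) (h : H) : actL W b h = W.act h b := rfl
@[simp] lemma Lm_apply (y : A ⊗[k] H) (h : H) : Lm mul y h = mul (1 ⊗ₜ h) y := rfl
@[simp] lemma EE_tmul (a : A) (h : H) : EE (a ⊗ₜ[k] h) = counit (R := k) h • a := by simp [EE]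
@[simp] lemma KK1_tmul (h l m : H) : KK1 W f (h ⊗ₜ (l ⊗ₜ m)) = W.act h (f l m) := rfl
@[simp] lemma KK2_tmul (h l m : H) : KK2 f (h ⊗ₜ (l ⊗ₜ m)) = f h (l * m) := rfl
@[simp] lemma KK3_tmul (h l m : H) : KK3 f (h ⊗ₜ (l ⊗ₜ m)) = counit (R := k) m • f h l := by
  simp [KK3]
@[simp] lemma KK4_tmul (h l m : H) : KK4 f (h ⊗ₜ (l ⊗ₜ m)) = f (h * l) m := rfl
@[simp] lemma TT_tmul (c : A) (h l : H) : TT W c (h ⊗ₜ l) = W.act h (W.act l c) := rfl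
@[simp] lemma VV_tmul (z : A ⊗[k] H) (h l : H) :
    VV mul z (h ⊗ₜ l) = mul (1 ⊗ₜ h) (mul (1 ⊗ₜ l) z) := rfl

lemma EE_smul (a : A) (x : A ⊗[k] H) : EE (a • x) = a • EE x := by
  induction x with
  | zero => simp
  | add x y hx hy => simp only [smul_add, map_add, hx, hy]
  | tmul b h => simp [TensorProduct.smul_tmul']

lemma EE_J : (EE ∘ₗ JJ : H →ₗ[k] A) = eps := by
  ext h; simp [eps, Algebra.algebraMap_eq_smul_one]

lemma EE_Jm : (EE ∘ₗ JJ ∘ₗ mu : H ⊗[k] H →ₗ[k] A) = eps := by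
  ext h l; simp [eps, Algebra.algebraMap_eq_smul_one, smul_smul, mul_comm]

lemma actL_one : actL W 1 = eps := by
  ext h; simp [eps, W.act_one, Algebra.algebraMap_eq_smul_one]

lemma actL_mul (a b : A) : actL W (a * b) = star (actL W a) (actL W b) := by
  ext h
  obtain ⟨N, u, v, hh⟩ := exists_repr (k := k) h
  rw [star_apply _ _ h u v hh, actL_apply, W.act_mul h a b N (fun i => ![u i, v i])]
  · simp
  · rw [srep_one]; simpa using hh

/-- the map sending `h` to the product of `1 ⊗ h` and `1 ⊗ l` -/
def QQ (l : H) : H →ₗ[k] A ⊗[k] H := star (FF f) (JJ ∘ₗ mu) ∘ₗ (TensorProduct.mk k H H).flip l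

lemma QQ_apply (l y : H) : QQ f l y = star (FF f) (JJ ∘ₗ mu) (y ⊗ₜ[k] l) := rfl

variable {W f mul}

lemma mul_tmul_tmul (hmul : IsCrossedMul W f mul) (a b : A) (h l : H) :
    mul (a ⊗ₜ h) (b ⊗ₜ l) = a • star (actL W b) (QQ f l) h := by
  obtain ⟨N, u, hu⟩ := exists_srep_two (k := k) h
  obtain ⟨M, v, w, hv⟩ := exists_repr (k := k) l
  rw [hmul a b h l N M u (fun i => ![v i, w i]) hu (by rw [srep_one]; simpa using hv)]
  rw [srep_two] at hu
  obtain ⟨R, hR⟩ : ∃ R : H →ₗ[k] H →ₗ[k] A ⊗[k] H,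
      ∀ p q, R p q = ∑ j, f p (v j) • ((1 : A) ⊗ₜ[k] (q * w j)) :=
    ⟨∑ j, (Algebra.lsmul k k (A ⊗[k] H)).toLinearMap.compl₁₂
      (f.flip (v j)) (JJ ∘ₗ LinearMap.mulRight k (w j)), by
      intro p q; simp only [LinearMap.sum_apply]; rfl⟩
  have hQ : ∀ y, QQ f l y = TensorProduct.lift R (comul (R := k) y) := by
    intro y
    obtain ⟨K, s, t, hy⟩ := exists_repr (k := k) y
    rw [QQ_apply, star_apply _ _ _ _ _ (repr_tmul y l s t v w hy hv), hy, Fintype.sum_prod_type]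
    simp only [map_sum, TensorProduct.lift.tmul, hR]
    rfl
  have hG : ∀ z, TensorProduct.lift
      ((Algebra.lsmul k k (A ⊗[k] H)).toLinearMap.compl₁₂ (actL W b) (QQ f l)) z =
      TensorProduct.lift ((Algebra.lsmul k k (A ⊗[k] H)).toLinearMap.compl₁₂ (actL W b)
        (TensorProduct.lift R)) (comul.lTensor H z) := by
    intro z
    induction z with
    | zero => simp
    | add a b ha hb => simp only [map_add, ha, hb]
    | tmul x y => simp [hQ]
  have h3 : star (actL W b) (QQ f l) h = _ := hG (comul h)
  rw [h3, hu]
  simp [hR, Finset.smul_sum, TensorProduct.smul_tmul', mul_assoc]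

lemma mul_smul_left (hmul : IsCrossedMul W f mul) (a : A) (x y : A ⊗[k] H) :
    mul (a • x) y = a • mul x y := by
  induction x with
  | zero => simp
  | add x x' hx hx' => simp only [smul_add, map_add, LinearMap.add_apply, hx, hx']
  | tmul b h =>
    induction y with
    | zero => simp
    | add y y' hy hy' => simp only [smul_add, map_add, hy, hy']
    | tmul c l =>
      rw [TensorProduct.smul_tmul', mul_tmul_tmul hmul, mul_tmul_tmul hmul, smul_eq_mul, mul_smul]

lemma Lm_J (hmul : IsCrossedMul W f mul) (l : H) : Lm mul (1 ⊗ₜ l) = QQ f l := by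
  ext h
  rw [Lm_apply, mul_tmul_tmul hmul, actL_one, eps_star, one_smul]

lemma mul_one_one (hmul : IsCrossedMul W f mul) (h l : H) :
    mul (1 ⊗ₜ h) (1 ⊗ₜ l) = star (FF f) (JJ ∘ₗ mu) (h ⊗ₜ l) := by
  rw [← Lm_apply, Lm_J hmul]; rfl

lemma Lm_smul (hmul : IsCrossedMul W f mul) (b : A) (y : A ⊗[k] H) :
    Lm mul (b • y) = star (actL W b) (Lm mul y) := by
  have ha : ∀ y y', Lm mul (y + y') = Lm mul y + Lm mul y' := by
    intro y y'; ext; simp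
  have h0 : Lm mul 0 = 0 := by ext; simp
  have h1 : ∀ c l, Lm mul (c ⊗ₜ l) = star (actL W c) (QQ f l) := by
    intro c l; ext h; simp [mul_tmul_tmul hmul]
  induction y with
  | zero => rw [smul_zero, h0, star_zero]
  | add y y' hy hy' => rw [smul_add, ha, ha, hy, hy', star_add]
  | tmul c l => rw [TensorProduct.smul_tmul', h1, h1, smul_eq_mul, actL_mul, star_assoc]

lemma mul_mul (hmul : IsCrossedMul W f mul) (h l : H) (z : A ⊗[k] H) :
    mul (mul (1 ⊗ₜ h) (1 ⊗ₜ l)) z = star (FF f) (Lm mul z ∘ₗ mu) (h ⊗ₜ l) := by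
  obtain ⟨N, u, v, hh⟩ := exists_repr (k := k) h
  obtain ⟨N', u', v', hl⟩ := exists_repr (k := k) l
  rw [mul_one_one hmul, star_apply _ _ _ _ _ (repr_tmul h l _ _ _ _ hh hl),
    star_apply _ _ _ _ _ (repr_tmul h l _ _ _ _ hh hl), map_sum, LinearMap.sum_apply]
  refine Finset.sum_congr rfl fun p _ => ?_
  rw [mul_smul_left hmul]
  rfl

lemma VV_smul (hmul : IsCrossedMul W f mul) (c : A) (z : A ⊗[k] H) :
    VV mul (c • z) = star (TT W c) (VV mul z) := by
  ext h l
  obtain ⟨N, u, v, hh⟩ := exists_repr (k := k) h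
  obtain ⟨N', u', v', hl⟩ := exists_repr (k := k) l
  simp only [TensorProduct.AlgebraTensorModule.curry_apply, TensorProduct.curry_apply,
    LinearMap.restrictScalars_apply]
  rw [star_apply _ _ _ _ _ (repr_tmul h l _ _ _ _ hh hl), VV_tmul, ← Lm_apply mul (c • z) l,
    Lm_smul hmul, star_apply _ _ _ _ _ hl, map_sum, Fintype.sum_prod_type, Finset.sum_comm]
  refine Finset.sum_congr rfl fun j _ => ?_
  rw [← Lm_apply, Lm_smul hmul, star_apply _ _ _ _ _ hh]
  rfl

lemma mul_left (hmul : IsCrossedMul W f mul) (h l m : H) :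
    mul (1 ⊗ₜ h) (mul (1 ⊗ₜ l) (1 ⊗ₜ m)) =
      star (KK1 W f) (star (FF f) (JJ ∘ₗ mu) ∘ₗ LinearMap.lTensor H mu) (h ⊗ₜ (l ⊗ₜ m)) := by
  obtain ⟨N, u, v, hh⟩ := exists_repr (k := k) h
  obtain ⟨N', u', v', hl⟩ := exists_repr (k := k) l
  obtain ⟨N'', u'', v'', hm⟩ := exists_repr (k := k) m
  have h2 := repr_tmul l m _ _ _ _ hl hm
  rw [star_apply _ _ _ _ _ (repr_tmul h _ _ _ _ _ hh h2), mul_one_one hmul,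
    star_apply _ _ _ _ _ h2, map_sum]
  conv_rhs => rw [Fintype.sum_prod_type, Finset.sum_comm]
  refine Finset.sum_congr rfl fun j _ => ?_
  rw [← Lm_apply, Lm_smul hmul, star_apply _ _ _ _ _ hh]
  refine Finset.sum_congr rfl fun i _ => ?_
  simp [mul_one_one hmul]

lemma star_KK3 {X : Type} [AddCommGroup X] [Module k X] [Module A X] [IsScalarTower k A X]
    (Q : H ⊗[k] (H ⊗[k] H) →ₗ[k] X) (h l m : H) :
    star (KK3 f) Q (h ⊗ₜ (l ⊗ₜ m)) =
      star (FF f) (Q ∘ₗ (TensorProduct.assoc k H H H).toLinearMap ∘ₗ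
        (TensorProduct.mk k (H ⊗[k] H) H).flip m) (h ⊗ₜ l) := by
  obtain ⟨N, u, v, hh⟩ := exists_repr (k := k) h
  obtain ⟨N', u', v', hl⟩ := exists_repr (k := k) l
  obtain ⟨N'', u'', v'', hm⟩ := exists_repr (k := k) m
  have h2 := repr_tmul l m _ _ _ _ hl hm
  have hc : ∑ p, counit (R := k) (u'' p) • v'' p = m := by
    have := congrArg (TensorProduct.lid k H) (rTensor_counit_comul (R := k) m)
    simpa [hm] using this
  rw [star_apply _ _ _ _ _ (repr_tmul h _ _ _ _ _ hh h2),
    star_apply _ _ _ _ _ (repr_tmul h _ _ _ _ _ hh hl)]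
  simp only [Fintype.sum_prod_type]
  refine Finset.sum_congr rfl fun i _ => Finset.sum_congr rfl fun j _ => ?_
  change _ = f (u i) (u' j) • Q (v i ⊗ₜ[k] (v' j ⊗ₜ[k] m))
  conv_rhs => rw [← hc]
  simp only [
    TensorProduct.tmul_sum, map_sum, Finset.smul_sum, KK3_tmul, TensorProduct.tmul_smul,
    map_smul, smul_assoc]
  refine Finset.sum_congr rfl fun p _ => ?_
  exact (smul_algebra_smul_comm _ _ _).symm

lemma cocycle_iff : IsCocycle W f ↔ star (KK1 W f) (KK2 f) = star (KK3 f) (KK4 f) := by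
  have key : ∀ (h l m : H) (N₁ N₂ N₃ : ℕ) (u : Fin N₁ → Fin 2 → H) (v : Fin N₂ → Fin 2 → H)
      (w : Fin N₃ → Fin 2 → H), SRep k 1 h N₁ u → SRep k 1 l N₂ v → SRep k 1 m N₃ w →
      (∑ i, ∑ j, ∑ p, W.act (u i 0) (f (v j 0) (w p 0)) * f (u i 1) (v j 1 * w p 1)) =
        star (KK1 W f) (KK2 f) (h ⊗ₜ (l ⊗ₜ m)) ∧
      ∑ i, ∑ j, f (u i 0) (v j 0) * f (u i 1 * v j 1) m =
        star (KK3 f) (KK4 f) (h ⊗ₜ (l ⊗ₜ m)) := by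
    intro h l m N₁ N₂ N₃ u v w hu hv hw
    rw [srep_one] at hu hv hw
    have h2 := repr_tmul l m _ _ _ _ hv hw
    rw [star_apply _ _ _ _ _ (repr_tmul h _ _ _ _ _ hu h2), star_KK3,
      star_apply _ _ _ _ _ (repr_tmul h _ _ _ _ _ hu hv)]
    simp [Fintype.sum_prod_type]
  constructor
  · intro hc
    ext h l m
    obtain ⟨N, u, v, hh⟩ := exists_repr (k := k) h
    obtain ⟨N', u', v', hl⟩ := exists_repr (k := k) l
    obtain ⟨N'', u'', v'', hm⟩ := exists_repr (k := k) m
    have s1 : SRep k 1 h N (fun i => ![u i, v i]) := by rw [srep_one]; simpa using hh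
    have s2 : SRep k 1 l N' (fun i => ![u' i, v' i]) := by rw [srep_one]; simpa using hl
    have s3 : SRep k 1 m N'' (fun i => ![u'' i, v'' i]) := by rw [srep_one]; simpa using hm
    have := key h l m _ _ _ _ _ _ s1 s2 s3
    exact this.1.symm.trans ((hc h l m _ _ _ _ _ _ s1 s2 s3).trans this.2)
  · intro hc h l m N₁ N₂ N₃ u v w hu hv hw
    have := key h l m _ _ _ _ _ _ hu hv hw
    rw [this.1, this.2, hc]

lemma twisted_iff : IsTwistedModule W f ↔
    ∀ a, star (TT W a) (FF f) = star (FF f) (actL W a ∘ₗ mu) := by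
  have key : ∀ (h l : H) (a : A) (N₁ N₂ : ℕ) (u : Fin N₁ → Fin 2 → H) (v : Fin N₂ → Fin 2 → H),
      SRep k 1 h N₁ u → SRep k 1 l N₂ v →
      (∑ i, ∑ j, W.act (u i 0) (W.act (v j 0) a) * f (u i 1) (v j 1)) =
        star (TT W a) (FF f) (h ⊗ₜ l) ∧
      ∑ i, ∑ j, f (u i 0) (v j 0) * W.act (u i 1 * v j 1) a =
        star (FF f) (actL W a ∘ₗ mu) (h ⊗ₜ l) := by
    intro h l a N₁ N₂ u v hu hv
    rw [srep_one] at hu hv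
    rw [star_apply _ _ _ _ _ (repr_tmul h _ _ _ _ _ hu hv),
      star_apply _ _ _ _ _ (repr_tmul h _ _ _ _ _ hu hv)]
    simp [Fintype.sum_prod_type]
  constructor
  · intro hc a
    ext h l
    obtain ⟨N, u, v, hh⟩ := exists_repr (k := k) h
    obtain ⟨N', u', v', hl⟩ := exists_repr (k := k) l
    have s1 : SRep k 1 h N (fun i => ![u i, v i]) := by rw [srep_one]; simpa using hh
    have s2 : SRep k 1 l N' (fun i => ![u' i, v' i]) := by rw [srep_one]; simpa using hl
    have := key h l a _ _ _ _ s1 s2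
    exact this.1.symm.trans ((hc h l a _ _ _ _ s1 s2).trans this.2)
  · intro hc h l a N₁ N₂ u v hu hv
    have := key h l a _ _ _ _ hu hv
    rw [this.1, this.2, hc]

def phi2 : H ⊗[k] (H ⊗[k] H) →ₗc[k] H ⊗[k] H :=
  Coalgebra.TensorProduct.map (CoalgHom.id k H) (Bialgebra.mulCoalgHom k H)

lemma phi2_eq : (phi2 : H ⊗[k] (H ⊗[k] H) →ₗc[k] H ⊗[k] H).toLinearMap =
    LinearMap.lTensor H mu := rfl

def phi4 : H ⊗[k] (H ⊗[k] H) →ₗc[k] H ⊗[k] H :=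
  (Coalgebra.TensorProduct.map (Bialgebra.mulCoalgHom k H) (CoalgHom.id k H)).comp
    ((Coalgebra.TensorProduct.assoc k k H H H).symm : H ⊗[k] (H ⊗[k] H) →ₗc[k] _)

lemma phi4_eq : (phi4 : H ⊗[k] (H ⊗[k] H) →ₗc[k] H ⊗[k] H).toLinearMap =
    LinearMap.rTensor H mu ∘ₗ (TensorProduct.assoc k H H H).symm.toLinearMap := rfl

lemma star_mu {X : Type} [AddCommGroup X] [Module k X] [Module A X] [IsScalarTower k A X]
    (g : H →ₗ[k] A) (L : H →ₗ[k] X) :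
    star g L ∘ₗ mu = star (g ∘ₗ mu) (L ∘ₗ mu) :=
  (star_comp (Bialgebra.mulCoalgHom k H) g L).symm

/-- associativity on generators -/
lemma gen_assoc (hmul : IsCrossedMul W f mul) (hc : IsCocycle W f) (m : H) :
    star (FF f) (Lm mul (1 ⊗ₜ m) ∘ₗ mu) = VV mul (1 ⊗ₜ m) := by
  rw [cocycle_iff] at hc
  ext h l
  simp only [TensorProduct.AlgebraTensorModule.curry_apply, TensorProduct.curry_apply,
    LinearMap.restrictScalars_apply]
  rw [VV_tmul, mul_left hmul, ← phi2_eq, ← star_comp, ← star_assoc]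
  have e2 : FF f ∘ₗ phi2.toLinearMap = KK2 f := rfl
  have e4 : FF f ∘ₗ phi4.toLinearMap = KK4 f := rfl
  have e : (JJ ∘ₗ mu) ∘ₗ phi2.toLinearMap =
      ((JJ ∘ₗ mu) ∘ₗ phi4.toLinearMap : H ⊗[k] (H ⊗[k] H) →ₗ[k] A ⊗[k] H) := by
    rw [phi2_eq, phi4_eq]
    ext h l m
    simp [mul_assoc]
  rw [e2, hc, star_assoc, e, ← e4, star_comp, star_KK3]
  congr 2
  ext x y
  simp [mul_one_one hmul]
  rfl

lemma gen_assoc' (hmul : IsCrossedMul W f mul) (hc : IsCocycle W f) (ht : IsTwistedModule W f)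
    (z : A ⊗[k] H) : star (FF f) (Lm mul z ∘ₗ mu) = VV mul z := by
  rw [twisted_iff] at ht
  induction z with
  | zero =>
    have h1 : Lm mul 0 = 0 := by ext; simp
    have h2 : VV mul 0 = 0 := by ext; simp
    rw [h1, h2, LinearMap.zero_comp, star_zero]
  | add x y hx hy =>
    have h1 : Lm mul (x + y) = Lm mul x + Lm mul y := by ext; simp
    have h2 : VV mul (x + y) = VV mul x + VV mul y := by ext; simp
    rw [h1, h2, LinearMap.add_comp, star_add, hx, hy]
  | tmul c m =>
    have : c ⊗ₜ[k] m = c • ((1 : A) ⊗ₜ[k] m) := by simp [TensorProduct.smul_tmul']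
    rw [this, Lm_smul hmul, VV_smul hmul, star_mu, ← gen_assoc hmul hc, ← star_assoc, ← ht,
      star_assoc]

lemma assoc_of (hmul : IsCrossedMul W f mul) (hc : IsCocycle W f) (ht : IsTwistedModule W f)
    (x y z : A ⊗[k] H) : mul (mul x y) z = mul x (mul y z) := by
  induction x with
  | zero => simp
  | add x x' hx hx' => simp only [map_add, LinearMap.add_apply, hx, hx']
  | tmul a h =>
    induction y with
    | zero => simp
    | add y y' hy hy' => simp only [map_add, LinearMap.add_apply, hy, hy']
    | tmul b l =>
      have e1 : a ⊗ₜ[k] h = a • ((1 : A) ⊗ₜ[k] h) := by simp [TensorProduct.smul_tmul']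
      have e2 : b ⊗ₜ[k] l = b • ((1 : A) ⊗ₜ[k] l) := by simp [TensorProduct.smul_tmul']
      obtain ⟨N, u, v, hh⟩ := exists_repr (k := k) h
      rw [e1, e2]
      simp only [mul_smul_left hmul]
      congr 1
      rw [← Lm_apply, ← Lm_apply mul (b • _), Lm_smul hmul, Lm_smul hmul,
        star_apply _ _ _ _ _ hh, star_apply _ _ _ _ _ hh, map_sum, LinearMap.sum_apply]
      refine Finset.sum_congr rfl fun i _ => ?_
      rw [mul_smul_left hmul, Lm_apply, mul_mul hmul, gen_assoc' hmul hc ht]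
      rfl

lemma unit_of (hmul : IsCrossedMul W f mul) (hn : IsNormal f) (x : A ⊗[k] H) :
    mul ((1 : A) ⊗ₜ[k] (1 : H)) x = x ∧ mul x ((1 : A) ⊗ₜ[k] (1 : H)) = x := by
  have h1 : comul (R := k) (1 : H) = ∑ i : Fin 1, (fun _ => (1 : H)) i ⊗ₜ[k] (fun _ => (1 : H)) i := by
    simp [Algebra.TensorProduct.one_def]
  have g1 : ∀ l : H, mul ((1 : A) ⊗ₜ[k] (1 : H)) (1 ⊗ₜ l) = 1 ⊗ₜ l := by
    intro l
    obtain ⟨N, u, v, hh⟩ := exists_repr (k := k) l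
    have := star_apply (eps : H →ₗ[k] A) (JJ : H →ₗ[k] A ⊗[k] H) l u v hh
    rw [eps_star] at this
    rw [mul_one_one hmul, star_apply _ _ _ _ _ (repr_tmul 1 l _ _ _ _ h1 hh),
      Fintype.sum_prod_type]
    simpa [(hn _).2, eps, TensorProduct.smul_tmul'] using this.symm
  have g2 : ∀ l : H, mul ((1 : A) ⊗ₜ[k] l) (1 ⊗ₜ (1 : H)) = 1 ⊗ₜ l := by
    intro l
    obtain ⟨N, u, v, hh⟩ := exists_repr (k := k) l
    have := star_apply (eps : H →ₗ[k] A) (JJ : H →ₗ[k] A ⊗[k] H) l u v hh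
    rw [eps_star] at this
    rw [mul_one_one hmul, star_apply _ _ _ _ _ (repr_tmul l 1 _ _ _ _ hh h1),
      Fintype.sum_prod_type]
    simpa [(hn _).1, eps, TensorProduct.smul_tmul'] using this.symm
  induction x with
  | zero => simp
  | add x y hx hy => simp [hx, hy]
  | tmul b l =>
    have e2 : b ⊗ₜ[k] l = b • ((1 : A) ⊗ₜ[k] l) := by simp [TensorProduct.smul_tmul']
    constructor
    · rw [e2, ← Lm_apply, Lm_smul hmul, star_apply _ _ _ _ _ h1]
      simp [W.one_act, g1]
    · rw [e2, mul_smul_left hmul, g2]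

lemma EE_mul (hmul : IsCrossedMul W f mul) (h l : H) : EE (mul (1 ⊗ₜ h) (1 ⊗ₜ l)) = f h l := by
  rw [mul_one_one hmul, ← LinearMap.comp_apply, comp_star _ EE_smul, EE_Jm, star_eps]
  rfl

lemma forward (hmul : IsCrossedMul W f mul)
    (ha : ∀ x y z : A ⊗[k] H, mul (mul x y) z = mul x (mul y z))
    (hu : ∀ x : A ⊗[k] H, mul ((1 : A) ⊗ₜ[k] (1 : H)) x = x ∧
          mul x ((1 : A) ⊗ₜ[k] (1 : H)) = x) :
    IsNormal f ∧ IsCocycle W f ∧ IsTwistedModule W f := by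
  refine ⟨fun h => ⟨?_, ?_⟩, ?_, ?_⟩
  · rw [← EE_mul hmul, (hu _).2, EE_tmul]
  · rw [← EE_mul hmul, (hu _).1, EE_tmul]
  · rw [cocycle_iff]
    ext h l m
    have := congrArg EE (ha (1 ⊗ₜ h) (1 ⊗ₜ l) (1 ⊗ₜ m))
    rw [mul_left hmul, mul_mul hmul, ← LinearMap.comp_apply, ← LinearMap.comp_apply,
      comp_star _ EE_smul, comp_star _ EE_smul, ← LinearMap.comp_assoc (LinearMap.lTensor H mu) _ EE,
      comp_star _ EE_smul, EE_Jm, star_eps] at this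
    refine Eq.trans this.symm ?_
    refine Eq.trans ?_ (star_KK3 _ h l m).symm
    congr 2
    ext x y
    simp [EE_mul hmul]
  · rw [twisted_iff]
    intro c
    ext h l
    have := congrArg EE (ha (1 ⊗ₜ h) (1 ⊗ₜ l) (c • 1 ⊗ₜ 1))
    rw [mul_mul hmul, ← VV_tmul, VV_smul hmul, ← LinearMap.comp_apply, ← LinearMap.comp_apply,
      comp_star _ EE_smul, comp_star _ EE_smul, Lm_smul hmul] at this
    have hL : Lm mul (1 ⊗ₜ 1) = JJ := by ext h; simp [(hu _).2]
    have hV : EE ∘ₗ VV mul (1 ⊗ₜ 1) = FF f := by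
      ext h l
      simp [(hu _).2, EE_mul hmul]
    rw [hV, hL, ← LinearMap.comp_assoc, comp_star _ EE_smul, EE_J, star_eps] at this
    exact this.symm
end
end Star

/-- **Crossed products: associativity criterion.**
Let `H` be a Hopf algebra with a weak action on a `k`-algebra `A`, let
`f : H ⊗ H → A` be a `k`-bilinear map, and endow `A ⊗ H` with the product
`(a ⊗ h)(b ⊗ l) = a b^{h⁽¹⁾} f(h⁽²⁾, l⁽¹⁾) ⊗ h⁽³⁾ l⁽²⁾`.  This product is associative
with `1 ⊗ 1` as a two-sided identity if and only if `f` is normal, `f` satisfies the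
cocycle condition, and the twisted module condition holds. -/
theorem crossed_product_assoc_iff
    {k A H : Type} [CommRing k] [Ring A] [Algebra k A] [Ring H] [HopfAlgebra k H]
    (W : WeakAction k A H) (f : H →ₗ[k] H →ₗ[k] A)
    (mul : (A ⊗[k] H) →ₗ[k] (A ⊗[k] H) →ₗ[k] (A ⊗[k] H))
    (hmul : IsCrossedMul W f mul) :
    ((∀ x y z : A ⊗[k] H, mul (mul x y) z = mul x (mul y z)) ∧
        (∀ x : A ⊗[k] H, mul ((1 : A) ⊗ₜ[k] (1 : H)) x = x ∧
          mul x ((1 : A) ⊗ₜ[k] (1 : H)) = x)) ↔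
      (IsNormal f ∧ IsCocycle W f ∧ IsTwistedModule W f) := by
  constructor
  · rintro ⟨ha, hu⟩
    exact forward hmul ha hu
  · rintro ⟨hn, hc, ht⟩
    exact ⟨assoc_of hmul hc ht, unit_of hmul hn⟩

end HopfCrossed
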